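/- Conventional mass scaling with uniform scaling parameter α > 1: let K = Σ_{e=1}^N L_e^T·K_e·L_e with each K_e ∈ ℝ^{m×m} symmetric positive semidefinite, and let M = Σ_{e=1}^N L_e^T·M_e·L_e where each M_e = diag(d_{e,1},…,d_{e,m}) is a diagonal matrix with positive entries. Let M̄ = Σ_{e=1}^N L_e^T·M̄_e·L_e where each M̄_e is diagonal with (M̄_e)_{jj} ∈ {d_{e,j}, α·d_{e,j}} for each j. Then for every i = 1,…,n: λ_i(K, M̄) ≤ λ_i(K, M) ≤ α·λ_i(K, M̄); equivalently, the scaled and unscaled eigenfrequencies satisfy 1 ≤ ω_i/ω̄_i ≤ √α wherever ω̄_i > 0. -/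

import Mathlib

open Matrix

/-- The eigenvalues of a symmetric real matrix listed in ascending order with multiplicity. -/
noncomputable def sortedEigs {n : ℕ} (M : Matrix (Fin n) (Fin n) ℝ) : Fin n → ℝ :=
  if h : M.IsHermitian then h.eigenvalues ∘ Tuple.sort h.eigenvalues else 0

-- The generalized eigenvalues `λ_1(A,B) ≤ … ≤ λ_n(A,B)`: the eigenvalues of
-- `B^{-1/2} A B^{-1/2}` in ascending order with multiplicity (`B` positive definite).
open Classical in
open scoped MatrixOrder in
noncomputable def genEigs {n : ℕ} (A B : Matrix (Fin n) (Fin n) ℝ) : Fin n → ℝ :=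
  if hB : B.PosDef then sortedEigs ((CFC.sqrt B)⁻¹ * A * (CFC.sqrt B)⁻¹) else 0

/-- The Boolean connectivity matrix `L_e` of an element whose local-to-global map is `σ`:
its rows are the standard basis vectors of `ℝ^n` selected by `σ`. -/
def elemL {ι : Type*} {n : ℕ} (σ : ι → Fin n) : Matrix ι (Fin n) ℝ :=
  Matrix.of fun i j => if σ i = j then 1 else 0

open scoped MatrixOrder in
lemma exists_simdiag {n : ℕ} (A B : Matrix (Fin n) (Fin n) ℝ) (hA : A.IsHermitian)
    (hB : B.PosDef) :
    ∃ V : Matrix (Fin n) (Fin n) ℝ, Vᵀ * B * V = 1 ∧ Vᵀ * A * V = diagonal (genEigs A B) ∧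
      Monotone (genEigs A B) := by
  classical
  set S := CFC.sqrt B with hS
  have hB0 : (0 : Matrix (Fin n) (Fin n) ℝ) ≤ B := Matrix.nonneg_iff_posSemidef.mpr hB.posSemidef
  have hSS : S * S = B := CFC.sqrt_mul_sqrt_self B hB0
  have hSH : S.IsHermitian :=
    (Matrix.nonneg_iff_posSemidef.mp (CFC.sqrt_nonneg B)).isHermitian
  have hSt : Sᵀ = S := by simpa [Matrix.IsHermitian, conjTranspose_eq_transpose_of_trivial] using hSH
  have hAt : Aᵀ = A := by simpa [Matrix.IsHermitian, conjTranspose_eq_transpose_of_trivial] using hA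
  have hdet : IsUnit S.det := by
    have h1 : S.det * S.det = B.det := by rw [← det_mul, hSS]
    have h2 := hB.det_pos
    rw [isUnit_iff_ne_zero]
    intro h
    rw [h] at h1
    simp at h1
    linarith
  have hC : (S⁻¹ * A * S⁻¹).IsHermitian := by
    rw [Matrix.IsHermitian, conjTranspose_eq_transpose_of_trivial]
    simp only [transpose_mul, transpose_nonsing_inv, hSt, hAt, Matrix.mul_assoc]
  have hg : genEigs A B = hC.eigenvalues ∘ Tuple.sort hC.eigenvalues := by
    unfold genEigs
    rw [dif_pos hB]
    unfold sortedEigs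
    rw [dif_pos hC]
  set τ := Tuple.sort hC.eigenvalues
  set U : Matrix (Fin n) (Fin n) ℝ := (hC.eigenvectorUnitary : Matrix (Fin n) (Fin n) ℝ) with hU
  have hUU : Uᵀ * U = 1 := by
    have := Unitary.coe_star_mul_self hC.eigenvectorUnitary
    simpa [star_eq_conjTranspose, conjTranspose_eq_transpose_of_trivial] using this
  have hUC : Uᵀ * (S⁻¹ * A * S⁻¹) * U = diagonal hC.eigenvalues := by
    have := hC.conjStarAlgAut_star_eigenvectorUnitary
    rw [Unitary.conjStarAlgAut_apply] at this
    simpa [star_eq_conjTranspose, conjTranspose_eq_transpose_of_trivial, Function.comp_def]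
      using this
  have hSi : (S⁻¹)ᵀ = S⁻¹ := by rw [transpose_nonsing_inv, hSt]
  have key : ∀ X : Matrix (Fin n) (Fin n) ℝ, ((S⁻¹ * U).submatrix id τ)ᵀ * X *
      ((S⁻¹ * U).submatrix id τ) = (Uᵀ * (S⁻¹ * X * S⁻¹) * U).submatrix τ τ := by
    intro X
    have e1 : Uᵀ * (S⁻¹ * X * S⁻¹) * U = (S⁻¹ * U)ᵀ * X * (S⁻¹ * U) := by
      rw [transpose_mul, hSi]
      simp only [Matrix.mul_assoc]
    rw [e1]
    ext i j
    simp [Matrix.mul_apply]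
  refine ⟨(S⁻¹ * U).submatrix id τ, ?_, ?_, ?_⟩
  · have e2 : S⁻¹ * B * S⁻¹ = 1 := by
      rw [← hSS, ← Matrix.mul_assoc, Matrix.nonsing_inv_mul _ hdet, Matrix.one_mul,
        Matrix.mul_nonsing_inv _ hdet]
    rw [key, e2, Matrix.mul_one, hUU]
    simp
  · rw [key, hUC, hg]
    ext i j
    simp [diagonal_apply]
  · rw [hg]
    exact Tuple.monotone_sort _

lemma quad_mulVec {n : ℕ} (V X : Matrix (Fin n) (Fin n) ℝ) (c : Fin n → ℝ) :
    (V *ᵥ c) ⬝ᵥ (X *ᵥ (V *ᵥ c)) = c ⬝ᵥ ((Vᵀ * X * V) *ᵥ c) := by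
  rw [← mulVec_mulVec, ← mulVec_mulVec, dotProduct_mulVec c, vecMul_transpose]

lemma exists_compare {n : ℕ} (A B₁ B₂ : Matrix (Fin n) (Fin n) ℝ) (hA : A.IsHermitian)
    (h₁ : B₁.PosDef) (h₂ : B₂.PosDef) (i : Fin n) :
    ∃ x : Fin n → ℝ, x ≠ 0 ∧
      genEigs A B₂ i * (x ⬝ᵥ (B₂ *ᵥ x)) ≤ genEigs A B₁ i * (x ⬝ᵥ (B₁ *ᵥ x)) := by
  classical
  obtain ⟨V, hV1, hVA, hVm⟩ := exists_simdiag A B₁ hA h₁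
  obtain ⟨W, hW1, hWA, hWm⟩ := exists_simdiag A B₂ hA h₂
  have hWi : W * (Wᵀ * B₂) = 1 := mul_eq_one_comm.mp hW1
  let Q := (Wᵀ * B₂) * V
  let f : ({j : Fin n // j ≤ i} → ℝ) →ₗ[ℝ] ({j : Fin n // j < i} → ℝ) :=
    (Q.submatrix (fun j : {j : Fin n // j < i} => (j : Fin n))
      (fun j : {j : Fin n // j ≤ i} => (j : Fin n))).mulVecLin
  have hker : LinearMap.ker f ≠ ⊥ := by
    apply LinearMap.ker_ne_bot_of_finrank_lt
    simp only [Module.finrank_fintype_fun_eq_card]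
    refine Fintype.card_lt_of_injective_of_notMem
      (fun j : {j : Fin n // j < i} => (⟨j, j.2.le⟩ : {j : Fin n // j ≤ i})) ?_ (b := ⟨i, le_rfl⟩) ?_
    · intro a b h
      simpa [Subtype.ext_iff] using h
    · rintro ⟨a, h⟩
      have := a.2
      simp only [Subtype.mk.injEq] at h
      exact absurd h this.ne
  obtain ⟨c₀, hc₀, hc₀n⟩ := Submodule.exists_mem_ne_zero_of_ne_bot hker
  let c : Fin n → ℝ := fun j => if h : j ≤ i then c₀ ⟨j, h⟩ else 0
  have hc : ∀ j, i < j → c j = 0 := fun j h => dif_neg (not_le.mpr h)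
  have hcn : c ≠ 0 := by
    intro h
    apply hc₀n
    funext j
    have := congrFun h j
    simpa [c, j.2] using this
  have hQ : ∀ j, j < i → (Q *ᵥ c) j = 0 := by
    intro j hj
    have h := congrFun (LinearMap.mem_ker.mp hc₀) ⟨j, hj⟩
    simp only [f, mulVecLin_apply, mulVec, dotProduct, submatrix_apply, Pi.zero_apply] at h
    simp only [mulVec, dotProduct]
    rw [← h, ← Finset.sum_subset (Finset.subset_univ (Finset.univ.filter fun k => k ≤ i)),
      Finset.sum_subtype (p := fun k => k ≤ i)]
    · refine Finset.sum_congr rfl fun k _ => ?_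
      simp [c, k.2]
    · simp
    · intro k _ hk
      simp only [Finset.mem_filter, Finset.mem_univ, true_and, not_le] at hk
      rw [hc k hk, mul_zero]
  have hx : V *ᵥ c = W *ᵥ (Q *ᵥ c) := by
    rw [mulVec_mulVec, ← Matrix.mul_assoc, hWi, Matrix.one_mul]
  refine ⟨V *ᵥ c, ?_, ?_⟩
  · intro h
    apply hcn
    have : (Vᵀ * B₁ * V) *ᵥ c = 0 := by rw [← mulVec_mulVec, h, mulVec_zero]
    rwa [hV1, one_mulVec] at this
  have e1 : (V *ᵥ c) ⬝ᵥ (A *ᵥ (V *ᵥ c)) ≤ genEigs A B₁ i * ((V *ᵥ c) ⬝ᵥ (B₁ *ᵥ (V *ᵥ c))) := by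
    rw [quad_mulVec, quad_mulVec, hV1, hVA, one_mulVec]
    simp only [dotProduct, mulVec_diagonal, Finset.mul_sum]
    refine Finset.sum_le_sum fun j _ => ?_
    rcases le_or_gt j i with h | h
    · nlinarith [mul_le_mul_of_nonneg_right (hVm h) (mul_self_nonneg (c j))]
    · simp [hc j h]
  have e2 : genEigs A B₂ i * ((V *ᵥ c) ⬝ᵥ (B₂ *ᵥ (V *ᵥ c))) ≤ (V *ᵥ c) ⬝ᵥ (A *ᵥ (V *ᵥ c)) := by
    rw [hx, quad_mulVec W B₂, quad_mulVec W A, hW1, hWA, one_mulVec]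
    simp only [dotProduct, mulVec_diagonal, Finset.mul_sum]
    refine Finset.sum_le_sum fun j _ => ?_
    rcases le_or_gt i j with h | h
    · nlinarith [mul_le_mul_of_nonneg_right (hWm h) (mul_self_nonneg ((Q *ᵥ c) j))]
    · simp [hQ j h]
  exact e2.trans e1

lemma genEigs_nonneg {n : ℕ} (A B : Matrix (Fin n) (Fin n) ℝ) (hA : A.PosSemidef)
    (hB : B.PosDef) (i : Fin n) : 0 ≤ genEigs A B i := by
  obtain ⟨V, -, hVA, -⟩ := exists_simdiag A B hA.isHermitian hB
  have h := hA.conjTranspose_mul_mul_same V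
  rw [conjTranspose_eq_transpose_of_trivial, hVA] at h
  exact posSemidef_diagonal_iff.mp h i

lemma elemL_mulVec {ι : Type*} {n : ℕ} (σ : ι → Fin n) (x : Fin n → ℝ) (j : ι) :
    (elemL σ *ᵥ x) j = x (σ j) := by
  simp [elemL, mulVec, dotProduct]

lemma assembled_quad {N m n : ℕ} (σ : Fin N → Fin m → Fin n) (d : Fin N → Fin m → ℝ)
    (x : Fin n → ℝ) :
    x ⬝ᵥ ((∑ e, (elemL (σ e))ᵀ * Matrix.diagonal (d e) * elemL (σ e)) *ᵥ x) =
      ∑ e, ∑ j, d e j * x (σ e j) ^ 2 := by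
  rw [sum_mulVec, dotProduct_sum]
  refine Finset.sum_congr rfl fun e _ => ?_
  rw [← mulVec_mulVec, ← mulVec_mulVec, dotProduct_mulVec, vecMul_transpose, dotProduct]
  refine Finset.sum_congr rfl fun j _ => ?_
  rw [mulVec_diagonal, elemL_mulVec]
  ring

lemma assembled_posDef {N m n : ℕ} (σ : Fin N → Fin m → Fin n) (d : Fin N → Fin m → ℝ)
    (hcover : ∀ i, ∃ e j, σ e j = i) (hd : ∀ e j, 0 < d e j) :
    (∑ e, (elemL (σ e))ᵀ * Matrix.diagonal (d e) * elemL (σ e)).PosDef := by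
  refine PosDef.of_dotProduct_mulVec_pos ?_ ?_
  · rw [Matrix.IsHermitian, conjTranspose_eq_transpose_of_trivial, transpose_sum]
    simp [Matrix.mul_assoc]
  · intro x hx
    rw [star_trivial, assembled_quad]
    obtain ⟨i, hi⟩ := Function.ne_iff.mp hx
    obtain ⟨e, j, rfl⟩ := hcover i
    have hi' : x (σ e j) ≠ 0 := hi
    have hnn : ∀ e j, 0 ≤ d e j * x (σ e j) ^ 2 := fun e j =>
      mul_nonneg (hd e j).le (sq_nonneg _)
    refine Finset.sum_pos' (fun e _ => Finset.sum_nonneg fun j _ => hnn e j)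
      ⟨e, Finset.mem_univ _, Finset.sum_pos' (fun j _ => hnn e j) ⟨j, Finset.mem_univ _, ?_⟩⟩
    have := hd e j
    positivity

/-- **Conventional mass scaling with a uniform scaling parameter `α > 1`.**
Let `K = Σ_e L_eᵀ·K_e·L_e` with `K_e ⪰ 0` symmetric, `M = Σ_e L_eᵀ·M_e·L_e` with `M_e`
diagonal with positive diagonal `d_e`, and let `M̄ = Σ_e L_eᵀ·M̄_e·L_e` where each `M̄_e` is
diagonal with `(M̄_e)_{jj}` equal to either `d_{e,j}` or `α·d_{e,j}`. Then for every `i`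
`λ_i(K,M̄) ≤ λ_i(K,M) ≤ α·λ_i(K,M̄)`; equivalently the eigenfrequencies `ω_i = √λ_i(K,M)`
and `ω̄_i = √λ_i(K,M̄)` satisfy `1 ≤ ω_i/ω̄_i ≤ √α` wherever `ω̄_i > 0`. -/
theorem conventional_mass_scaling_bounds {N m n pmax : ℕ} (hpmax : 0 < pmax)
    (α : ℝ) (hα : 1 < α)
    (σ : Fin (N+1) → Fin (m+1) → Fin (n+1))
    (hinj : ∀ e, Function.Injective (σ e))
    (hcover : ∀ i : Fin (n+1), ∃ e j, σ e j = i)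
    (hp : ∀ i : Fin (n+1), (Finset.univ.filter fun e => ∃ j, σ e j = i).card ≤ pmax)
    (Ke : Fin (N+1) → Matrix (Fin (m+1)) (Fin (m+1)) ℝ)
    (hKe : ∀ e, (Ke e).PosSemidef)
    (d s : Fin (N+1) → Fin (m+1) → ℝ)
    (hd : ∀ e j, 0 < d e j)
    (hs : ∀ e j, s e j = d e j ∨ s e j = α * d e j)
    (K M Mbar : Matrix (Fin (n+1)) (Fin (n+1)) ℝ)
    (hK : K = ∑ e, (elemL (σ e))ᵀ * Ke e * elemL (σ e))
    (hM : M = ∑ e, (elemL (σ e))ᵀ * Matrix.diagonal (d e) * elemL (σ e))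
    (hMbar : Mbar = ∑ e, (elemL (σ e))ᵀ * Matrix.diagonal (s e) * elemL (σ e)) :
    ∀ i : Fin (n+1),
      (genEigs K Mbar i ≤ genEigs K M i ∧ genEigs K M i ≤ α * genEigs K Mbar i) ∧
      (0 < genEigs K Mbar i →
        1 ≤ Real.sqrt (genEigs K M i) / Real.sqrt (genEigs K Mbar i) ∧
        Real.sqrt (genEigs K M i) / Real.sqrt (genEigs K Mbar i) ≤ Real.sqrt α) := by
  have hspos : ∀ e j, 0 < s e j := by
    intro e j
    have := hd e j
    rcases hs e j with h | h <;> rw [h]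
    · exact this
    · exact mul_pos (by linarith) this
  have hMP : M.PosDef := hM ▸ assembled_posDef σ d hcover hd
  have hMbP : Mbar.PosDef := hMbar ▸ assembled_posDef σ s hcover hspos
  have hKP : K.PosSemidef := by
    rw [hK]
    refine posSemidef_sum _ fun e _ => ?_
    have := (hKe e).conjTranspose_mul_mul_same (elemL (σ e))
    rwa [conjTranspose_eq_transpose_of_trivial] at this
  have q1 : ∀ x, x ⬝ᵥ (M *ᵥ x) ≤ x ⬝ᵥ (Mbar *ᵥ x) := by
    intro x
    rw [hM, hMbar, assembled_quad, assembled_quad]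
    refine Finset.sum_le_sum fun e _ => Finset.sum_le_sum fun j _ => ?_
    refine mul_le_mul_of_nonneg_right ?_ (sq_nonneg _)
    have := hd e j
    rcases hs e j with h | h <;> rw [h]
    nlinarith
  have q2 : ∀ x, x ⬝ᵥ (Mbar *ᵥ x) ≤ α * (x ⬝ᵥ (M *ᵥ x)) := by
    intro x
    rw [hM, hMbar, assembled_quad, assembled_quad]
    simp only [Finset.mul_sum, ← mul_assoc]
    refine Finset.sum_le_sum fun e _ => Finset.sum_le_sum fun j _ => ?_
    refine mul_le_mul_of_nonneg_right ?_ (sq_nonneg _)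
    have := hd e j
    rcases hs e j with h | h <;> rw [h]
    nlinarith
  intro i
  have n1 := genEigs_nonneg K M hKP hMP i
  have n2 := genEigs_nonneg K Mbar hKP hMbP i
  have b1 : genEigs K Mbar i ≤ genEigs K M i := by
    obtain ⟨x, hx, h⟩ := exists_compare K M Mbar hKP.isHermitian hMP hMbP i
    have hp2 : 0 < x ⬝ᵥ (Mbar *ᵥ x) := by simpa using hMbP.dotProduct_mulVec_pos hx
    exact le_of_mul_le_mul_right (h.trans (mul_le_mul_of_nonneg_left (q1 x) n1)) hp2
  have b2 : genEigs K M i ≤ α * genEigs K Mbar i := by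
    obtain ⟨x, hx, h⟩ := exists_compare K Mbar M hKP.isHermitian hMbP hMP i
    have hp2 : 0 < x ⬝ᵥ (M *ᵥ x) := by simpa using hMP.dotProduct_mulVec_pos hx
    refine le_of_mul_le_mul_right ((h.trans (mul_le_mul_of_nonneg_left (q2 x) n2)).trans_eq ?_) hp2
    ring
  refine ⟨⟨b1, b2⟩, fun hpos => ?_⟩
  have hsq := Real.sqrt_pos.mpr hpos
  rw [one_le_div hsq, div_le_iff₀ hsq, ← Real.sqrt_mul (by linarith)]
  exact ⟨Real.sqrt_le_sqrt b1, Real.sqrt_le_sqrt b2⟩
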